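/- Let (R,m) be a regular local ring with dim R = 3 and let I be a nonzero proper ideal of R such that I^{n+1} : I = I^n for all integers n ≥ 1. Then the depth function is non-increasing: depth(R/I^{n+1}) ≤ depth(R/I^n) for all n ≥ 1. -/

import Mathlib

/-!
The set of lengths of regular sequences in `m` shrinks when `I ^ n` is replaced by `I ^ (n + 1)`:
every regular sequence on `R ⧸ I ^ (n + 1)` is regular on `R ⧸ I ^ n`.

For a sequence of length one this is immediate from `I ^ (n + 1) : I = I ^ n`: if `a x ∈ I ^ n`,
then `a x I ⊆ I ^ (n + 1)`, so `x I ⊆ I ^ (n + 1)`.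

If there is a regular sequence of length at least two, then `R ⧸ I ^ (n + 1)` is Cohen–Macaulay of
dimension two, and `I ^ (n + 1)` is principal. Instead of factoriality of `R` or the
Auslander–Buchsbaum formula, the proof (`isPrincipal_of_two_le_depth`) cuts down by two elements
`x, y ∈ m`, independent in the cotangent space and regular on the quotient; they exist by prime
avoidance and because depth does not depend on the chosen regular element (`noSocle_exchange`).
The maximal ideal of `R ⧸ (x, y)` is principal, so all its ideals are, and Nakayama's lemma lifts
the generator. The colon condition and Krull's intersection theorem show that no nonzero element
annihilates a power of `I`; hence the generator of `I ^ (n + 1)` is a nonzerodivisor, `I` is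
invertible and thus `I = (g)` with `g` regular (`isPrincipal_of_pow`). Finally, for a
nonzerodivisor `g`, regular sequences on `R ⧸ (g ^ (n + 1))` are regular on `R ⧸ (g ^ n)`
(`WReg.pow_pred`).
-/

open IsLocalRing

/-- `R` is a regular local ring: Noetherian local and the maximal ideal is generated by
`dim R` elements. -/
def IsRegularLocal (R : Type*) [CommRing R] [IsLocalRing R] : Prop :=
  IsNoetherianRing R ∧ ∃ s : Finset R,
    Ideal.span (s : Set R) = IsLocalRing.maximalIdeal R ∧
    (s.card : WithBot ℕ∞) = ringKrullDim R

/-- The height of an ideal: the infimum of heights of primes containing it. -/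
noncomputable def idealHeight {R : Type*} [CommRing R] (I : Ideal R) : ℕ∞ :=
  ⨅ (P : PrimeSpectrum R) (_ : I ≤ P.asIdeal), Order.height P

/-- The `m`-depth of `R ⧸ I`: the supremum of lengths of `R ⧸ I`-regular sequences
with entries in `m`. -/
noncomputable def depthIn {R : Type*} [CommRing R] (m I : Ideal R) : ℕ :=
  sSup {n : ℕ | ∃ rs : List R, rs.length = n ∧ (∀ r ∈ rs, r ∈ m) ∧
    RingTheory.Sequence.IsRegular (R ⧸ I) rs}

/-- The index of Ass-stability of `I`: the least `n₀ ≥ 1` with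
`Ass(R/Iⁿ) = Ass(R/I^{n₀})` for all `n ≥ n₀`. -/
noncomputable def astab {R : Type*} [CommRing R] (I : Ideal R) : ℕ :=
  sInf {n₀ : ℕ | 0 < n₀ ∧ ∀ n, n₀ ≤ n →
    associatedPrimes R (R ⧸ I ^ n) = associatedPrimes R (R ⧸ I ^ n₀)}

/-- The index of depth-stability of `I` (depth taken with respect to `m`). -/
noncomputable def dstab {R : Type*} [CommRing R] (m I : Ideal R) : ℕ :=
  sInf {n₀ : ℕ | 0 < n₀ ∧ ∀ n, n₀ ≤ n → depthIn m (I ^ n) = depthIn m (I ^ n₀)}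

/-- The set of elements integral over the ideal `I`. -/
def intClSet {R : Type*} [CommRing R] (I : Ideal R) : Set R :=
  {x | ∃ n : ℕ, 0 < n ∧ ∃ a : ℕ → R, (∀ i ∈ Finset.Icc 1 n, a i ∈ I ^ i) ∧
    x ^ n + ∑ i ∈ Finset.Icc 1 n, a i * x ^ (n - i) = 0}

/-- The integral closure of an ideal `I`.  (The set `intClSet I` is itself an ideal,
so taking the span does not enlarge it.) -/
noncomputable def intCl {R : Type*} [CommRing R] (I : Ideal R) : Ideal R :=
  Ideal.span (intClSet I)

/-- The index of Ass-stability for integral closures of powers of `I`. -/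
noncomputable def astabBar {R : Type*} [CommRing R] (I : Ideal R) : ℕ :=
  sInf {n₀ : ℕ | 0 < n₀ ∧ ∀ n, n₀ ≤ n →
    associatedPrimes R (R ⧸ intCl (I ^ n)) = associatedPrimes R (R ⧸ intCl (I ^ n₀))}

namespace DepthPowers

open RingTheory.Sequence
open scoped Pointwise

variable {R : Type*} [CommRing R]

/-! ### Regular sequences on cyclic modules -/

/-- `IsReg J r` says that `r` is a nonzerodivisor on `R ⧸ J`, in terms of elements of `R`. -/
def IsReg (J : Ideal R) (r : R) : Prop := ∀ x, r * x ∈ J → x ∈ J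

/-- `WReg J rs` says that `rs` is a weakly regular sequence on `R ⧸ J`, in terms of ideals of `R`:
the module `(R ⧸ J) ⧸ r (R ⧸ J)` is replaced by `R ⧸ (J + (r))`. -/
def WReg : Ideal R → List R → Prop
  | _, [] => True
  | J, r :: rs => IsReg J r ∧ WReg (J ⊔ Ideal.span {r}) rs

/-- `NoSocle m J` says that `R ⧸ J` has no nonzero element killed by `m`, that is,
`J : m = J`. -/
def NoSocle (m J : Ideal R) : Prop := ∀ u, (∀ r ∈ m, r * u ∈ J) → u ∈ J

theorem isReg_iff (J : Ideal R) (r : R) : IsSMulRegular (R ⧸ J) r ↔ IsReg J r :=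
  isSMulRegular_quotient_iff_mem_of_smul_mem J r

theorem wReg_iff (rs : List R) : ∀ J : Ideal R, IsWeaklyRegular (R ⧸ J) rs ↔ WReg J rs := by
  induction rs with
  | nil => intro J; simp [WReg]
  | cons r rs ih =>
    intro J
    have hsub : r • (⊤ : Submodule R (R ⧸ J)) =
        Submodule.map J.mkQ (Ideal.span {r} : Ideal R) := by
      ext y
      rw [Submodule.mem_smul_pointwise_iff_exists]
      simp only [Submodule.mem_map, Ideal.mem_span_singleton']
      constructor
      · rintro ⟨z, -, rfl⟩
        obtain ⟨z, rfl⟩ := J.mkQ_surjective z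
        exact ⟨r * z, ⟨z, mul_comm _ _⟩, by rw [← smul_eq_mul, map_smul]⟩
      · rintro ⟨_, ⟨a, rfl⟩, rfl⟩
        exact ⟨J.mkQ a, trivial, by rw [mul_comm a r, ← smul_eq_mul, map_smul]⟩
    let e : QuotSMulTop r (R ⧸ J) ≃ₗ[R] (R ⧸ (J ⊔ Ideal.span {r})) :=
      (Submodule.quotEquivOfEq _ _ hsub).trans (Submodule.quotientQuotientEquivQuotientSup _ _)
    rw [isWeaklyRegular_cons_iff, isReg_iff, e.isWeaklyRegular_congr, ih, WReg]

/-- The element `g` stays a nonzerodivisor modulo `f`, because `f`, being regular modulo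
`K + (g ^ (n + 1))`, is regular modulo `K + (g)`. -/
theorem IsReg.swap {K : Ideal R} {g f : R} {n : ℕ} (hg : IsReg K g)
    (hf : IsReg (K ⊔ Ideal.span {g ^ (n + 1)}) f) : IsReg (K ⊔ Ideal.span {f}) g := by
  have hgn : ∀ n : ℕ, ∀ x, g ^ n * x ∈ K → x ∈ K := by
    intro n
    induction n with
    | zero => intro x hx; simpa using hx
    | succ n ih => intro x hx; exact hg _ (ih _ (by rwa [pow_succ, mul_assoc] at hx))
  intro x hx
  rw [sup_comm, Ideal.mem_span_singleton_sup] at hx ⊢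
  obtain ⟨y, k, hk, hx⟩ := hx
  have h1 : f * (g ^ n * y) ∈ K ⊔ Ideal.span {g ^ (n + 1)} := by
    rw [sup_comm, Ideal.mem_span_singleton_sup]
    exact ⟨x, _, K.mul_mem_left (-g ^ n) hk, by linear_combination -g ^ n * hx⟩
  have h2 := hf _ h1
  rw [sup_comm, Ideal.mem_span_singleton_sup] at h2
  obtain ⟨w, k', hk', h2⟩ := h2
  have h3 : y - g * w ∈ K := hgn n _ (by convert hk' using 1; linear_combination -h2)
  refine ⟨w, x - w * f, hg _ ?_, by ring⟩
  convert K.add_mem hk (K.mul_mem_left f h3) using 1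
  linear_combination -hx

theorem IsReg.pow_pred {K : Ideal R} {g f : R} {n : ℕ} (hg : IsReg K g)
    (hf : IsReg (K ⊔ Ideal.span {g ^ (n + 1)}) f) : IsReg (K ⊔ Ideal.span {g ^ n}) f := by
  intro x hx
  rw [sup_comm, Ideal.mem_span_singleton_sup] at hx ⊢
  obtain ⟨y, k, hk, hx⟩ := hx
  have h1 : f * (g * x) ∈ K ⊔ Ideal.span {g ^ (n + 1)} := by
    rw [sup_comm, Ideal.mem_span_singleton_sup]
    exact ⟨y, _, K.mul_mem_left g hk, by linear_combination g * hx⟩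
  have h2 := hf _ h1
  rw [sup_comm, Ideal.mem_span_singleton_sup] at h2
  obtain ⟨w, k', hk', h2⟩ := h2
  refine ⟨w, x - w * g ^ n, hg _ ?_, by ring⟩
  convert hk' using 1
  linear_combination -h2

theorem WReg.pow_pred {g : R} {n : ℕ} (rs : List R) : ∀ {K : Ideal R}, IsReg K g →
    WReg (K ⊔ Ideal.span {g ^ (n + 1)}) rs → WReg (K ⊔ Ideal.span {g ^ n}) rs := by
  induction rs with
  | nil => intros; trivial
  | cons f rs ih =>
    intro K hg h
    refine ⟨hg.pow_pred h.1, ?_⟩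
    rw [sup_right_comm]
    refine ih (hg.swap h.1) ?_
    rw [sup_right_comm]
    exact h.2

/-! ### Cyclic modules of depth at least two -/

/-- Whether `depth R ⧸ J` is at least two can be tested with any single regular element `x`: a
socle element `u` modulo `J + (x)` would give the socle element `v` modulo `J + (a)` with
`a u = x v` modulo `J`. -/
theorem noSocle_exchange {m J : Ideal R} {a b x : R} (ham : a ∈ m) (hbm : b ∈ m)
    (ha : IsReg J a) (hb : IsReg (J ⊔ Ideal.span {a}) b) (hx : IsReg J x) :
    NoSocle m (J ⊔ Ideal.span {x}) := by
  intro u hu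
  have h1 := hu a ham
  have h2 := hu b hbm
  rw [sup_comm, Ideal.mem_span_singleton_sup] at h1 h2 ⊢
  obtain ⟨v, j, hj, h1⟩ := h1
  obtain ⟨w, j', hj', h2⟩ := h2
  have h3 : b * v - a * w ∈ J := hx _ (by
    convert J.sub_mem (J.mul_mem_left a hj') (J.mul_mem_left b hj) using 1
    linear_combination b * h1 - a * h2)
  have h4 : v ∈ J ⊔ Ideal.span {a} := hb _ (by
    rw [sup_comm, Ideal.mem_span_singleton_sup]
    exact ⟨w, _, h3, by ring⟩)
  rw [sup_comm, Ideal.mem_span_singleton_sup] at h4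
  obtain ⟨t, j'', hj'', h4⟩ := h4
  refine ⟨t, u - t * x, ha _ ?_, by ring⟩
  convert J.add_mem hj (J.mul_mem_left x hj'') using 1
  linear_combination -h1 - x * h4

/-- Prime avoidance: `NoSocle` means that `m` is not an associated prime of `R ⧸ J`, so a regular
element on `R ⧸ J` can be found in `m` outside any ideal `N` (prime or not) not containing `m`. -/
theorem exists_isReg [IsNoetherianRing R] [IsLocalRing R] {J N : Ideal R}
    (hJ : NoSocle (maximalIdeal R) J) (hN : ¬ maximalIdeal R ≤ N) :
    ∃ x ∈ maximalIdeal R, x ∉ N ∧ IsReg J x := by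
  classical
  by_contra! hcon
  have hfin := associatedPrimes.finite R (R ⧸ J)
  have hsub : (maximalIdeal R : Set R) ⊆
      ⋃ i ∈ (insert N hfin.toFinset : Finset (Ideal R)), (id i : Ideal R) := by
    intro x hx
    by_cases hxN : x ∈ N
    · exact Set.mem_biUnion (x := N) (by simp) hxN
    · have h := hcon x hx hxN
      simp only [IsReg] at h
      push Not at h
      obtain ⟨y, hy, hyJ⟩ := h
      have : x ∈ ⋃ p ∈ associatedPrimes R (R ⧸ J), (p : Set R) := by
        rw [biUnion_associatedPrimes_eq_zero_divisors]
        exact ⟨Submodule.Quotient.mk y, by rwa [ne_eq, Submodule.Quotient.mk_eq_zero],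
          by rwa [← Submodule.Quotient.mk_smul, Submodule.Quotient.mk_eq_zero]⟩
      obtain ⟨p, hp, hxp⟩ := Set.mem_iUnion₂.mp this
      exact Set.mem_biUnion (x := p) (by simp [hp]) hxp
  have hsub' := (Ideal.subset_union_prime (s := insert N hfin.toFinset) (f := id) N N ?_).1 hsub
  · obtain ⟨p, hp, hmp⟩ := hsub'
    rw [Finset.mem_insert] at hp
    rcases hp with rfl | hp
    · exact hN hmp
    · have hp' : p ∈ associatedPrimes R (R ⧸ J) := by simpa using hp
      rw [AssociatedPrimes.mem_iff, isAssociatedPrime_iff] at hp'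
      obtain ⟨hprime, u, hu⟩ := hp'
      obtain ⟨u, rfl⟩ := J.mkQ_surjective u
      have hkey : ∀ r, r ∈ p ↔ r * u ∈ J := by
        intro r
        rw [hu, Submodule.mem_colon_singleton, ← map_smul, Submodule.mem_bot,
          Submodule.mkQ_apply, Submodule.Quotient.mk_eq_zero, smul_eq_mul]
      have huJ : u ∈ J := hJ u fun r hr => (hkey r).1 (hmp hr)
      exact hprime.ne_top ((Ideal.eq_top_iff_one _).2 ((hkey 1).2 (by simpa using huJ)))
  · intro p hp hpN _
    rw [Finset.mem_insert] at hp
    have hp' : p ∈ associatedPrimes R (R ⧸ J) := by simpa using hp.resolve_left hpN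
    exact hp'.isPrime

/-- A Noetherian local ring with principal maximal ideal `(z)` is a principal ideal ring: a prime
`P` not containing `z` satisfies `P = z P`, hence vanishes by Nakayama. -/
theorem isPrincipalIdealRing [IsNoetherianRing R] [IsLocalRing R] {z : R}
    (hz : maximalIdeal R = Ideal.span {z}) : IsPrincipalIdealRing R := by
  refine IsPrincipalIdealRing.of_prime fun P hP => ?_
  by_cases hzP : z ∈ P
  · have : P = Ideal.span {z} :=
      le_antisymm (hz ▸ le_maximalIdeal hP.ne_top) ((Ideal.span_singleton_le_iff_mem _).2 hzP)
    exact this ▸ ⟨⟨z, rfl⟩⟩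
  · have : P = ⊥ := by
      refine Submodule.eq_bot_of_le_smul_of_le_jacobson_bot (maximalIdeal R) P
        (IsNoetherian.noetherian _) ?_ (maximalIdeal_le_jacobson _)
      intro p hp
      have h1 : p ∈ Ideal.span {z} := hz ▸ le_maximalIdeal hP.ne_top hp
      obtain ⟨q, rfl⟩ := Ideal.mem_span_singleton'.1 h1
      rw [mul_comm]
      exact Submodule.smul_mem_smul (hz ▸ Ideal.mem_span_singleton_self z)
        ((hP.mem_or_mem hp).resolve_right hzP)
    exact this ▸ inferInstance

theorem exists_generator_mod [IsNoetherianRing R] [IsLocalRing R] {z : R} {K : Ideal R}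
    (hz : maximalIdeal R = Ideal.span {z} ⊔ K) (J : Ideal R) :
    ∃ f ∈ J, J ≤ Ideal.span {f} ⊔ K := by
  have hK : K ≠ ⊤ := fun h => (maximalIdeal.isMaximal R).ne_top (by rw [hz, h, sup_top_eq])
  have : Nontrivial (R ⧸ K) := Ideal.Quotient.nontrivial_iff.2 hK
  have : IsLocalRing (R ⧸ K) :=
    IsLocalRing.of_surjective' (Ideal.Quotient.mk K) Ideal.Quotient.mk_surjective
  have hm : maximalIdeal (R ⧸ K) = Ideal.span {Ideal.Quotient.mk K z} := by
    rw [← IsLocalRing.map_maximalIdeal_of_surjective (Ideal.Quotient.mk K)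
      Ideal.Quotient.mk_surjective, hz, Ideal.map_sup, Ideal.map_quotient_self, sup_bot_eq,
      Ideal.map_span, Set.image_singleton]
  have := isPrincipalIdealRing hm
  obtain ⟨g, hg⟩ := (IsPrincipalIdealRing.principal (J.map (Ideal.Quotient.mk K))).principal
  have hgJ : g ∈ J.map (Ideal.Quotient.mk K) := hg ▸ Submodule.mem_span_singleton_self g
  obtain ⟨f, hf, rfl⟩ := (Ideal.mem_map_iff_of_surjective _ Ideal.Quotient.mk_surjective).1 hgJ
  refine ⟨f, hf, fun j hj => ?_⟩
  have h1 : Ideal.Quotient.mk K j ∈ Ideal.span {Ideal.Quotient.mk K f} :=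
    (hg ▸ Ideal.mem_map_of_mem _ hj : _ ∈ Submodule.span _ _)
  obtain ⟨c, hc⟩ := Ideal.mem_span_singleton'.1 h1
  obtain ⟨c, rfl⟩ := Ideal.Quotient.mk_surjective c
  rw [← map_mul, eq_comm, Ideal.Quotient.eq] at hc
  exact Ideal.mem_span_singleton_sup.2 ⟨c, _, hc, by ring⟩

/-- Exchange: an element `x` of `m` that is nonzero in the cotangent space of `R ⧸ K` replaces
one of the generators of `m` modulo `K`. -/
theorem exchange [IsLocalRing R] [DecidableEq R] {K : Ideal R} {S : Finset R} {x : R}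
    (hm : maximalIdeal R = K ⊔ Ideal.span (S : Set R)) (hx : x ∈ maximalIdeal R)
    (hx2 : x ∉ maximalIdeal R ^ 2 ⊔ K) :
    ∃ s ∈ S, maximalIdeal R = (K ⊔ Ideal.span {x}) ⊔ Ideal.span ((S.erase s : Finset R) : Set R) := by
  have hSm : ∀ s ∈ S, s ∈ maximalIdeal R := fun s hs => by
    rw [hm]; exact Ideal.mem_sup_right (Ideal.subset_span hs)
  have hx' := hx
  rw [hm, Submodule.mem_sup] at hx'
  obtain ⟨k, hk, w, hw, hkw⟩ := hx'
  obtain ⟨c, -, hc⟩ := Submodule.mem_span_finset.1 hw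
  have hu : ∃ s ∈ S, IsUnit (c s) := by
    by_contra! hcon
    refine hx2 (hkw ▸ Ideal.add_mem _ (Ideal.mem_sup_right hk) (Ideal.mem_sup_left ?_))
    rw [← hc, pow_two]
    exact Ideal.sum_mem _ fun s hs => Ideal.mul_mem_mul ((mem_maximalIdeal _).2 (hcon s hs)) (hSm s hs)
  obtain ⟨s, hs, hcs⟩ := hu
  refine ⟨s, hs, le_antisymm ?_ ?_⟩
  · rw [hm]
    refine sup_le (le_sup_left.trans le_sup_left) (Ideal.span_le.2 fun t ht => ?_)
    by_cases hts : t = s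
    · subst hts
      rw [← Finset.add_sum_erase S _ hs] at hc
      rw [SetLike.mem_coe, ← Ideal.unit_mul_mem_iff_mem _ hcs]
      have h : c t * t = (-k + x) + -∑ i ∈ S.erase t, c i • i := by
        simp only [smul_eq_mul] at hc ⊢
        linear_combination hc + hkw
      rw [h]
      refine Ideal.add_mem _ (Ideal.mem_sup_left (Ideal.add_mem _ ?_ ?_)) (Ideal.mem_sup_right ?_)
      · exact Ideal.mem_sup_left (neg_mem hk)
      · exact Ideal.mem_sup_right (Ideal.mem_span_singleton_self x)
      · exact neg_mem (Ideal.sum_mem _ fun i hi =>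
          Ideal.mul_mem_left _ _ (Ideal.subset_span (Finset.mem_coe.2 hi)))
    · exact Ideal.mem_sup_right (Ideal.subset_span (Finset.mem_coe.2 (Finset.mem_erase.2 ⟨hts, ht⟩)))
  · refine sup_le (sup_le (hm ▸ le_sup_left) ((Ideal.span_singleton_le_iff_mem _).2 hx))
      (Ideal.span_le.2 fun t ht => hSm t (Finset.mem_of_mem_erase (Finset.mem_coe.1 ht)))

/-- If `m` has three generators and `depth R ⧸ J ≥ 2`, then `J` is principal: two general
elements `x, y` of `m` form a regular sequence on `R ⧸ J` for which `R ⧸ (x, y)` is a principal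
ideal ring, and a generator of `J` modulo `(x, y)` lifts by Nakayama. -/
theorem isPrincipal_of_two_le_depth [IsNoetherianRing R] [IsLocalRing R] {S : Finset R}
    (hS : Ideal.span (S : Set R) = maximalIdeal R) (hcard : S.card ≤ 3) {J : Ideal R}
    {a b : R} (ham : a ∈ maximalIdeal R) (hbm : b ∈ maximalIdeal R)
    (ha : IsReg J a) (hb : IsReg (J ⊔ Ideal.span {a}) b) :
    ∃ f, J = Ideal.span {f} := by
  classical
  have hjac : maximalIdeal R ≤ Ideal.jacobson ⊥ := maximalIdeal_le_jacobson _
  have hfg : (maximalIdeal R).FG := IsNoetherian.noetherian _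
  -- It suffices to find `z` with `m = (z) + K` and `J ∩ K ⊆ m J`.
  have main : ∀ (z : R) (K : Ideal R), maximalIdeal R = Ideal.span {z} ⊔ K →
      J ⊓ K ≤ maximalIdeal R * J → ∃ f, J = Ideal.span {f} := by
    intro z K hz hK
    obtain ⟨f, hf, hJf⟩ := exists_generator_mod hz J
    refine ⟨f, le_antisymm ?_ ((Ideal.span_singleton_le_iff_mem _).2 hf)⟩
    refine Submodule.le_of_le_smul_of_le_jacobson_bot (I := maximalIdeal R)
      (IsNoetherian.noetherian J) hjac ?_
    intro j hj
    obtain ⟨c, k, hk, hck⟩ := Ideal.mem_span_singleton_sup.1 (hJf hj)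
    have hkJ : k ∈ J := by
      have : k = j - c * f := by rw [← hck]; ring
      rw [this]
      exact J.sub_mem hj (J.mul_mem_left c hf)
    rw [← hck]
    exact Submodule.add_mem_sup (Ideal.mem_span_singleton'.2 ⟨c, rfl⟩) (hK ⟨hkJ, hk⟩)
  have hnoJ : NoSocle (maximalIdeal R) J := fun u hu => ha u (hu a ham)
  by_cases h1 : maximalIdeal R ≤ maximalIdeal R ^ 2 ⊔ ⊥
  · have hbot : maximalIdeal R = ⊥ :=
      Submodule.eq_bot_of_le_smul_of_le_jacobson_bot (maximalIdeal R) _ hfg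
        (by simpa [pow_two] using h1) hjac
    exact main 0 ⊥ (by simp [hbot]) (by simp)
  obtain ⟨x, hxm, hx2, hxJ⟩ := exists_isReg hnoJ h1
  by_cases h2 : maximalIdeal R ≤ maximalIdeal R ^ 2 ⊔ Ideal.span {x}
  · refine main x ⊥ ?_ (by simp)
    rw [sup_bot_eq]
    refine le_antisymm ?_ ((Ideal.span_singleton_le_iff_mem _).2 hxm)
    refine Submodule.le_of_le_smul_of_le_jacobson_bot (I := maximalIdeal R) hfg hjac ?_
    rwa [smul_eq_mul, ← pow_two, sup_comm]
  obtain ⟨y, hym, hy2, hyJ⟩ := exists_isReg (noSocle_exchange ham hbm ha hb hxJ) h2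
  obtain ⟨s, hs, hm1⟩ := exchange (K := ⊥) (by rw [hS, bot_sup_eq]) hxm hx2
  rw [bot_sup_eq] at hm1
  obtain ⟨t, ht, hm2⟩ := exchange hm1 hym hy2
  have hc1 : ((S.erase s).erase t).card ≤ 1 := by
    rw [Finset.card_erase_of_mem ht, Finset.card_erase_of_mem hs]
    omega
  obtain ⟨z, hz⟩ : ∃ z, maximalIdeal R = Ideal.span {z} ⊔ (Ideal.span {x} ⊔ Ideal.span {y}) := by
    obtain ⟨z, hz⟩ := Finset.card_le_one_iff_subset_singleton.1 hc1
    rcases Finset.subset_singleton_iff.1 hz with h | h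
    · exact ⟨0, by rw [hm2, h]; simp⟩
    · exact ⟨z, by rw [hm2, h, sup_comm]; simp⟩
  refine main z _ hz ?_
  -- As `x, y` is regular on `R ⧸ J`, an element `p x + q y` of `J` lies in `(x, y) J`.
  rintro j ⟨hj, hjxy⟩
  obtain ⟨p, k, hk, rfl⟩ := Ideal.mem_span_singleton_sup.1 hjxy
  obtain ⟨q, rfl⟩ := Ideal.mem_span_singleton'.1 hk
  have hq : q ∈ J ⊔ Ideal.span {x} := hyJ _ (by
    rw [sup_comm]
    exact Ideal.mem_span_singleton_sup.2 ⟨-p, _, hj, by ring⟩)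
  rw [sup_comm] at hq
  obtain ⟨p', j', hj', rfl⟩ := Ideal.mem_span_singleton_sup.1 hq
  have hp : p + p' * y ∈ J := hxJ _ (by
    convert J.sub_mem hj (J.mul_mem_left y hj') using 1; ring)
  have : p * x + (p' * x + j') * y = x * (p + p' * y) + y * j' := by ring
  rw [this]
  exact Ideal.add_mem _ (Ideal.mul_mem_mul hxm hp) (Ideal.mul_mem_mul hym hj')

/-! ### Consequences of the colon condition -/

section Powers

variable {I : Ideal R}

theorem colon_apply (hcolon : ∀ n : ℕ, 1 ≤ n → Submodule.colon (I ^ (n + 1)) I = I ^ n)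
    {n : ℕ} (hn : 1 ≤ n) {x : R} (hx : ∀ y ∈ I, x * y ∈ I ^ (n + 1)) : x ∈ I ^ n := by
  rw [← hcolon n hn]
  exact Submodule.mem_colon.2 hx

/-- The annihilator of `I` lies in every power of `I`, so it vanishes by Krull's intersection
theorem. -/
theorem eq_zero_of_mul_pow [IsNoetherianRing R] [IsLocalRing R] (hI : I ≠ ⊤)
    (hcolon : ∀ n : ℕ, 1 ≤ n → Submodule.colon (I ^ (n + 1)) I = I ^ n) (n : ℕ) :
    ∀ x : R, (∀ y ∈ I ^ n, x * y = 0) → x = 0 := by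
  have base : ∀ x : R, (∀ y ∈ I, x * y = 0) → x = 0 := by
    intro x hx
    have : x ∈ ⨅ i : ℕ, I ^ i := by
      rw [Submodule.mem_iInf]
      intro i
      exact Ideal.pow_le_pow_right (Nat.le_succ i)
        (colon_apply hcolon (Nat.succ_pos i) fun y hy => by rw [hx y hy]; exact zero_mem _)
    rwa [Ideal.iInf_pow_eq_bot_of_isLocalRing I hI, Submodule.mem_bot] at this
  induction n with
  | zero => intro x hx; simpa using hx 1 (by simp)
  | succ n ih =>
    intro x hx
    refine ih x fun y hy => base _ fun w hw => ?_
    rw [mul_assoc]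
    exact hx _ (by rw [pow_succ]; exact Ideal.mul_mem_mul hy hw)

/-- If `I ^ (n + 1) = (h)` with `h` a nonzerodivisor, then `I` is invertible, and over a local ring
it is generated by a factor `a ∈ I` of `h = a b` up to a unit, with `b ∈ I ^ n`. -/
theorem isPrincipal_of_pow [IsNoetherianRing R] [IsLocalRing R] {n : ℕ} {h : R}
    (hh : I ^ (n + 1) = Ideal.span {h}) (hreg : ∀ x, x * h = 0 → x = 0) :
    ∃ g, I = Ideal.span {g} := by
  have hpow : I ^ (n + 1) = I * I ^ n := pow_succ' I n
  have hex : ∃ a ∈ I, ∃ b ∈ I ^ n, ∃ u, IsUnit u ∧ a * b = u * h := by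
    by_contra! hcon
    have hle : I ^ (n + 1) ≤ maximalIdeal R • I ^ (n + 1) := by
      conv_lhs => rw [hpow]
      refine Ideal.mul_le.2 fun a ha b hb => ?_
      have hab : a * b ∈ Ideal.span {h} := by rw [← hh, hpow]; exact Ideal.mul_mem_mul ha hb
      obtain ⟨u, hu⟩ := Ideal.mem_span_singleton'.1 hab
      rw [← hu]
      refine Submodule.smul_mem_smul ((mem_maximalIdeal _).2 fun hunit => ?_)
        (hh ▸ Ideal.mem_span_singleton_self h)
      exact hcon a ha b hb u hunit hu.symm
    have h0 := Submodule.eq_bot_of_le_smul_of_le_jacobson_bot (maximalIdeal R) _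
      (IsNoetherian.noetherian _) hle (maximalIdeal_le_jacobson _)
    rw [hh, Ideal.span_singleton_eq_bot] at h0
    exact one_ne_zero (hreg 1 (by rw [h0, mul_zero]))
  obtain ⟨a, ha, b, hb, u, hu, hab⟩ := hex
  obtain ⟨v, hv⟩ := hu.exists_left_inv
  refine ⟨a, le_antisymm (fun x hx => ?_) ((Ideal.span_singleton_le_iff_mem _).2 ha)⟩
  have hxb : x * b ∈ Ideal.span {h} := by rw [← hh, hpow]; exact Ideal.mul_mem_mul hx hb
  obtain ⟨r, hr⟩ := Ideal.mem_span_singleton'.1 hxb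
  refine Ideal.mem_span_singleton'.2 ⟨r * v, ?_⟩
  -- `b` is a nonzerodivisor since `a * b = u * h` is one.
  have h1 : (r * v * a - x) * b = 0 := by
    linear_combination hr + r * v * hab + r * h * hv
  have h2 : u * (r * v * a - x) = 0 := hreg _ (by
    linear_combination a * h1 - (r * v * a - x) * hab)
  linear_combination v * h2 - (r * v * a - x) * hv

end Powers

end DepthPowers

theorem stmt19 {R : Type*} [CommRing R] [IsLocalRing R]
    (hreg : IsRegularLocal R)
    (hdim : ringKrullDim R = 3)
    (I : Ideal R) (hne : I ≠ ⊥) (hproper : I ≠ ⊤)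
    (hcolon : ∀ n : ℕ, 1 ≤ n → Submodule.colon (I ^ (n + 1)) I = I ^ n) :
    ∀ n : ℕ, 1 ≤ n →
      depthIn (IsLocalRing.maximalIdeal R) (I ^ (n + 1)) ≤
        depthIn (IsLocalRing.maximalIdeal R) (I ^ n) := by
  obtain ⟨hnoeth, S, hS, hScard⟩ := hreg
  have hcard : S.card ≤ 3 := by
    rw [hdim] at hScard
    exact le_of_eq (by exact_mod_cast hScard)
  intro n hn
  have hne_top : ∀ k : ℕ, 1 ≤ k → I ^ k ≠ ⊤ := fun k hk h =>
    hproper (top_le_iff.1 (h ▸ Ideal.pow_le_self (by omega)))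
  have hnt : ∀ k : ℕ, 1 ≤ k → Nontrivial (R ⧸ I ^ k) := fun k hk =>
    Ideal.Quotient.nontrivial_iff.2 (hne_top k hk)
  have := hnt n hn
  have := hnt (n + 1) (by omega)
  -- Boundedness matters: the supremum of an unbounded set of naturals is `0`.
  refine csSup_le_csSup ⟨3, ?_⟩ ⟨0, [], rfl, by simp, ?_⟩ ?_
  · rintro l ⟨rs, rfl, -, hrs⟩
    have h1 := Module.supportDim_add_length_eq_supportDim_of_isRegular rs hrs
    have h2 := Module.supportDim_le_ringKrullDim R (R ⧸ I ^ n)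
    have : Nontrivial ((R ⧸ I ^ n) ⧸ (Ideal.ofList rs • ⊤ : Submodule R (R ⧸ I ^ n))) :=
      Submodule.Quotient.nontrivial_iff.2 hrs.top_ne_smul.symm
    have h3 : (0 : WithBot ℕ∞) ≤ Module.supportDim R
        ((R ⧸ I ^ n) ⧸ (Ideal.ofList rs • ⊤ : Submodule R (R ⧸ I ^ n))) := by
      rw [Module.supportDim_eq_ringKrullDim_quotient_annihilator]
      have := Ideal.Quotient.nontrivial_iff.2 ((Module.annihilator_eq_top_iff (R := R)).not.2
        (not_subsingleton_iff_nontrivial.2 this))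
      exact ringKrullDim_nonneg_of_nontrivial
    have h4 : (rs.length : WithBot ℕ∞) ≤ 3 := by
      calc (rs.length : WithBot ℕ∞) ≤ _ := le_add_of_nonneg_left h3
        _ ≤ 3 := by rw [h1, ← hdim]; exact h2
    exact_mod_cast h4
  · exact (IsLocalRing.isRegular_iff_isWeaklyRegular_of_subset_maximalIdeal (by simp)).2
      (RingTheory.Sequence.IsWeaklyRegular.nil _ _)
  rintro l ⟨rs, hl, hmem, hrs⟩
  refine ⟨rs, hl, hmem, ?_⟩
  rw [IsLocalRing.isRegular_iff_isWeaklyRegular_of_subset_maximalIdeal hmem, DepthPowers.wReg_iff] at hrs ⊢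
  match rs, hrs, hmem with
  | [], _, _ => trivial
  | [a], hrs, _ =>
    refine ⟨fun x hx => DepthPowers.colon_apply hcolon hn fun y hy => hrs.1 _ ?_, trivial⟩
    rw [← mul_assoc, pow_succ]
    exact Ideal.mul_mem_mul hx hy
  | a :: b :: rs, hrs, hmem =>
    obtain ⟨f, hf⟩ := DepthPowers.isPrincipal_of_two_le_depth hS hcard (hmem a (by simp)) (hmem b (by simp))
      hrs.1 hrs.2.1
    have hzero := DepthPowers.eq_zero_of_mul_pow hproper hcolon
    obtain ⟨g, hg⟩ := DepthPowers.isPrincipal_of_pow hf fun x hx => hzero (n + 1) x fun y hy => by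
      rw [hf] at hy
      obtain ⟨c, rfl⟩ := Ideal.mem_span_singleton'.1 hy
      linear_combination c * hx
    have hgreg : DepthPowers.IsReg (⊥ : Ideal R) g := fun x hx => hzero 1 x fun y hy => by
      rw [pow_one, hg] at hy
      obtain ⟨c, rfl⟩ := Ideal.mem_span_singleton'.1 hy
      rw [Submodule.mem_bot] at hx
      linear_combination c * hx
    have key := DepthPowers.WReg.pow_pred (n := n) (a :: b :: rs) hgreg
    rw [bot_sup_eq, bot_sup_eq, ← Ideal.span_singleton_pow, ← Ideal.span_singleton_pow, ← hg] at key
    exact key hrs
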